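/- Let A ⊆ ℕ be a maximal c.e. set and let B be a c.e. set with B ⊊ A. Then (E_A)⁺ < (E_B)⁺: (E_A)⁺ is computably reducible to (E_B)⁺ but (E_B)⁺ is not computably reducible to (E_A)⁺. In particular, E_A is not high for the computable FS-jump, i.e., (E_A)⁺ is not computably bireducible with =^{ce}. -/

import Mathlib

/-- The `e`-th partial computable function. -/
def phi (e : ℕ) : ℕ →. ℕ :=
  Nat.Partrec.Code.eval (Denumerable.ofNat Nat.Partrec.Code e)

/-- `W_e`, the `e`-th c.e. set: the domain of `φ_e`. -/
def WSet (e : ℕ) : Set ℕ := (phi e).Dom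

/-- The `E`-equivalence class of `k`. -/
def classOf (E : ℕ → ℕ → Prop) (k : ℕ) : Set ℕ := {x | E k x}

/-- Computable reducibility of binary relations on ℕ. -/
def Reduces (E F : ℕ → ℕ → Prop) : Prop :=
  ∃ f : ℕ → ℕ, Computable f ∧ ∀ m n, E m n ↔ F (f m) (f n)

/-- The computable FS-jump of `E`: `e E⁺ e'` iff the set of `E`-classes of elements
of `ran φ_e` equals the set of `E`-classes of elements of `ran φ_{e'}`. -/
def FSJump (E : ℕ → ℕ → Prop) : ℕ → ℕ → Prop :=
  fun e e' => classOf E '' (phi e).ran = classOf E '' (phi e').ran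

/-- Equality of c.e. sets: `e =^{ce} e'` iff `W_e = W_{e'}`. -/
def eqCE : ℕ → ℕ → Prop := fun e e' => WSet e = WSet e'

/-- A set is c.e. if it is `W_e` for some `e`. -/
def CeSet (S : Set ℕ) : Prop := ∃ e : ℕ, S = WSet e

/-- `E_A`: `m E_A n` iff `m = n` or both `m, n ∈ A`. -/
def EA (A : Set ℕ) : ℕ → ℕ → Prop :=
  fun m n => m = n ∨ (m ∈ A ∧ n ∈ A)

/-- A c.e. set `A` is maximal if its complement is infinite and for every c.e. `W`,
either `W \ A` or `Wᶜ \ A` is finite. -/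
def MaximalSet (A : Set ℕ) : Prop :=
  CeSet A ∧ Aᶜ.Infinite ∧ ∀ W : Set ℕ, CeSet W → (W \ A).Finite ∨ (Wᶜ \ A).Finite


open Nat.Partrec (Code)

section REtools
variable {α β : Type*} [Primcodable α] [Primcodable β]

theorem re_nf {p : α → Prop} (hp : REPred p) :
    ∃ q : α → ℕ → Prop, PrimrecRel q ∧ (∀ a s t, s ≤ t → q a s → q a t) ∧
      ∀ a, p a ↔ ∃ s, q a s := by
  obtain ⟨c, hc⟩ := Nat.Partrec.Code.exists_code.1 hp
  refine ⟨fun a s => (c.evaln s (Encodable.encode a)).isSome = true, ?_, ?_, ?_⟩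
  · have h : Primrec fun x : α × ℕ => (c.evaln x.2 (Encodable.encode x.1)).isSome := by
      refine Primrec.option_isSome.comp ?_
      exact Code.primrec_evaln.comp
        ((Primrec.snd.pair (Primrec.const c)).pair (Primrec.encode.comp Primrec.fst))
    exact PrimrecRel.comp Primrec.eq h (Primrec.const true)
  · intro a s t hst h
    obtain ⟨x, hx⟩ := Option.isSome_iff_exists.1 h
    exact Option.isSome_iff_exists.2 ⟨x, Code.evaln_mono hst hx⟩
  · intro a
    have h1 : p a ↔ (c.eval (Encodable.encode a)).Dom := by
      rw [hc]
      simp only [Encodable.encodek, Part.coe_some, Part.bind_some]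
      change p a ↔ ∃ _ : p a, True
      simp
    rw [h1, Part.dom_iff_mem]
    constructor
    · rintro ⟨y, hy⟩
      obtain ⟨k, hk⟩ := Code.evaln_complete.1 hy
      exact ⟨k, Option.isSome_iff_exists.2 ⟨y, hk⟩⟩
    · rintro ⟨s, hs⟩
      obtain ⟨x, hx⟩ := Option.isSome_iff_exists.1 hs
      exact ⟨x, Code.evaln_sound hx⟩

theorem re_of_nf {q : α → ℕ → Prop} (hq : PrimrecRel q) : REPred fun a => ∃ s, q a s := by
  classical
  have h : Partrec fun a => Nat.rfind fun n => Part.some (decide (q a n)) := by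
    apply Partrec.rfind
    have : Primrec fun x : α × ℕ => decide (q x.1 x.2) := by
      obtain ⟨_, h⟩ := hq
      convert h
    exact this.to_comp.partrec
  refine h.dom_re.of_eq fun a => ?_
  refine Nat.rfind_dom.trans ?_
  constructor
  · rintro ⟨n, hn, -⟩
    exact ⟨n, by simpa using hn⟩
  · rintro ⟨n, hn⟩
    exact ⟨n, by simpa using hn, fun _ => trivial⟩

theorem re_prim {p : α → Prop} (hp : PrimrecPred p) : REPred p := by
  have : REPred fun a => ∃ s : ℕ, (fun a (_ : ℕ) => p a) a s :=
    re_of_nf (hp.comp Primrec.fst)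
  exact this.of_eq fun a => by simp

theorem re_comp {p : β → Prop} (hp : REPred p) {f : α → β} (hf : Computable f) :
    REPred fun a => p (f a) := Partrec.comp hp hf

theorem re_ex {p : α × ℕ → Prop} (hp : REPred p) : REPred fun a => ∃ n, p (a, n) := by
  obtain ⟨q, hq, -, h⟩ := re_nf hp
  have : REPred fun a => ∃ s : ℕ, q (a, s.unpair.1) s.unpair.2 := by
    refine re_of_nf (q := fun a s => q (a, s.unpair.1) s.unpair.2) ?_
    exact PrimrecRel.comp hq
      (Primrec.fst.pair (Primrec.fst.comp (Primrec.unpair.comp Primrec.snd)))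
      (Primrec.snd.comp (Primrec.unpair.comp Primrec.snd))
  refine this.of_eq fun a => ?_
  constructor
  · rintro ⟨s, hs⟩; exact ⟨_, (h _).2 ⟨_, hs⟩⟩
  · rintro ⟨n, hn⟩
    obtain ⟨s, hs⟩ := (h _).1 hn
    exact ⟨Nat.pair n s, by simpa using hs⟩

theorem re_and {p p' : α → Prop} (hp : REPred p) (hp' : REPred p') :
    REPred fun a => p a ∧ p' a := by
  obtain ⟨q, hq, m, h⟩ := re_nf hp
  obtain ⟨q', hq', m', h'⟩ := re_nf hp'
  refine (re_of_nf (q := fun a s => q a s ∧ q' a s) (PrimrecPred.and hq hq')).of_eq fun a => ?_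
  rw [h, h']
  constructor
  · rintro ⟨s, h1, h2⟩; exact ⟨⟨s, h1⟩, ⟨s, h2⟩⟩
  · rintro ⟨⟨s, h1⟩, ⟨t, h2⟩⟩
    exact ⟨max s t, m _ _ _ (le_max_left _ _) h1, m' _ _ _ (le_max_right _ _) h2⟩

theorem re_or {p p' : α → Prop} (hp : REPred p) (hp' : REPred p') :
    REPred fun a => p a ∨ p' a := by
  obtain ⟨q, hq, m, h⟩ := re_nf hp
  obtain ⟨q', hq', m', h'⟩ := re_nf hp'
  refine (re_of_nf (q := fun a s => q a s ∨ q' a s) (PrimrecPred.or hq hq')).of_eq fun a => ?_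
  rw [h, h', exists_or]

end REtools

/-- The range of the `e`-th partial computable function. -/
def Rng (e : ℕ) : Set ℕ := (phi e).ran

theorem re_Rng : REPred fun p : ℕ × ℕ => p.2 ∈ Rng p.1 := by
  have h : REPred fun p : ℕ × ℕ => ∃ t : ℕ,
      (fun (p : ℕ × ℕ) (t : ℕ) => Code.evaln t.unpair.1
        (Denumerable.ofNat Code p.1) t.unpair.2 = some p.2) p t := by
    apply re_of_nf
    refine PrimrecRel.comp (Primrec.eq (α := Option ℕ)) ?_ ?_
    · refine Code.primrec_evaln.comp (Primrec.pair (Primrec.pair ?_ ?_) ?_)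
      · exact Primrec.fst.comp (Primrec.unpair.comp Primrec.snd)
      · exact (Primrec.ofNat Code).comp (Primrec.fst.comp Primrec.fst)
      · exact Primrec.snd.comp (Primrec.unpair.comp Primrec.snd)
    · exact Primrec.option_some.comp (Primrec.snd.comp Primrec.fst)
  refine h.of_eq fun p => ?_
  constructor
  · rintro ⟨t, ht⟩
    exact ⟨t.unpair.2, Code.evaln_sound ht⟩
  · rintro ⟨x, hx⟩
    obtain ⟨k, hk⟩ := Code.evaln_complete.1 hx
    exact ⟨Nat.pair k x, by simpa using hk⟩

/-- Parametrized indices, for ranges and domains simultaneously. -/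
theorem re_param {R : ℕ × ℕ → Prop} (hR : REPred R) :
    ∃ g : ℕ → ℕ, Computable g ∧ (∀ i, Rng (g i) = {x | R (i, x)}) ∧
      ∀ i, WSet (g i) = {x | R (i, x)} := by
  have h : Partrec fun n : ℕ => (Part.assert (R n.unpair) fun _ => Part.some ()).map
      fun _ => n.unpair.2 := by
    refine Partrec.map (re_comp hR Primrec.unpair.to_comp) ?_
    exact (Computable.snd.comp (Primrec.unpair.to_comp.comp Computable.fst))
  obtain ⟨c, hc⟩ := Nat.Partrec.Code.exists_code.1 (Partrec.nat_iff.1 h)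
  have hev : ∀ i x y, y ∈ phi (Encodable.encode (c.curry i)) x ↔ R (i, x) ∧ x = y := by
    intro i x y
    simp [phi, Code.eval_curry, hc]
  refine ⟨fun i => Encodable.encode (c.curry i), ?_, ?_, ?_⟩
  · exact (Primrec.encode.comp (Code.primrec₂_curry.comp (Primrec.const c) Primrec.id)).to_comp
  · intro i
    ext y
    constructor
    · rintro ⟨x, hx⟩
      obtain ⟨h1, rfl⟩ := (hev i x y).1 hx
      exact h1
    · intro hy
      exact ⟨y, (hev i y y).2 ⟨hy, rfl⟩⟩
  · intro i
    ext y
    constructor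
    · intro hy
      obtain ⟨x, hx⟩ := Part.dom_iff_mem.1 hy
      exact ((hev i y x).1 hx).1
    · intro hy
      exact Part.dom_iff_mem.2 ⟨y, (hev i y y).2 ⟨hy, rfl⟩⟩

theorem re_fix {R : ℕ × ℕ → Prop} (hR : REPred R) : ∃ e, Rng e = {x | R (e, x)} := by
  obtain ⟨g, hg, h, -⟩ := re_param hR
  have : Computable fun c : Code => (Denumerable.ofNat Code (g (Encodable.encode c))) :=
    (Computable.ofNat Code).comp (hg.comp Computable.encode)
  obtain ⟨c, hc⟩ := Code.fixed_point this
  refine ⟨Encodable.encode c, ?_⟩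
  rw [← h]
  simp only [Rng, phi, Denumerable.ofNat_encode]
  rw [hc]

theorem ce_of_re {p : ℕ → Prop} (hp : REPred p) : CeSet {x | p x} := by
  obtain ⟨g, -, -, h⟩ := re_param (re_comp hp (Computable.snd (α := ℕ)))
  exact ⟨g 0, (h 0).symm⟩

theorem rng_of_re {p : ℕ → Prop} (hp : REPred p) : ∃ e, Rng e = {x | p x} := by
  obtain ⟨g, -, h, -⟩ := re_param (re_comp hp (Computable.snd (α := ℕ)))
  exact ⟨g 0, h 0⟩

theorem re_of_ce {S : Set ℕ} (h : CeSet S) : REPred fun x => x ∈ S := by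
  obtain ⟨e, rfl⟩ := h
  have : Partrec (phi e) := Partrec.nat_iff.2 (Code.exists_code.2 ⟨_, rfl⟩)
  exact this.dom_re

/-- Finite modifications for a finite family. -/
theorem exists_bound {S : Set ℕ} (h : S.Finite) : ∃ m, ∀ x ∈ S, x < m := by
  obtain ⟨m, hm⟩ := h.bddAbove
  exact ⟨m + 1, fun x hx => Nat.lt_succ_of_le (hm hx)⟩

/-- Normality of the filter generated by the complement of a maximal set. -/
theorem normality {A : Set ℕ} (hA : MaximalSet A) {R : ℕ × ℕ → Prop} (hR : REPred R)
    (hfin : ∀ y, y ∉ A → {z | z ∉ A ∧ ¬ R (z, y)}.Finite) :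
    {z | z ∉ A ∧ ∃ y, y < z ∧ y ∉ A ∧ ¬ R (z, y)}.Finite := by
  classical
  obtain ⟨hce, hinf, hmax⟩ := hA
  have hAre := re_of_ce hce
  obtain ⟨a, ha, am, ha'⟩ := re_nf hAre
  obtain ⟨q, hq, qm, hq'⟩ := re_nf (re_or hR (re_comp hAre (Computable.snd (α := ℕ) (β := ℕ))))
  -- the good set
  have hV : REPred fun z : ℕ => ∃ s, ∀ y, y < z → q (z, y) s := by
    apply re_of_nf (q := fun z s => ∀ y, y < z → q (z, y) s)
    have hu : Primrec fun b : ℕ × ℕ => b.2.unpair := Primrec.unpair.comp Primrec.snd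
    have h1 : PrimrecRel fun (y : ℕ) (b : ℕ) => q (b.unpair.1, y) b.unpair.2 :=
      PrimrecRel.comp hq ((Primrec.fst.comp hu).pair Primrec.fst) (Primrec.snd.comp hu)
    have h2 : PrimrecPred fun b : ℕ × ℕ => ∀ y, y < b.1 →
        q ((Nat.pair b.1 b.2).unpair.1, y) (Nat.pair b.1 b.2).unpair.2 :=
      PrimrecRel.comp (PrimrecRel.forall_lt h1) Primrec.fst
        (Primrec₂.natPair.comp Primrec.fst Primrec.snd)
    simp only [Nat.unpair_pair] at h2
    exact h2
  have hgood : ∀ z, (∀ y, y < z → (R (z, y) ∨ y ∈ A)) → ∃ s, ∀ y, y < z → q (z, y) s := by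
    intro z hz
    have : ∀ n, n ≤ z → ∃ s, ∀ y, y < n → q (z, y) s := by
      intro n
      induction n with
      | zero => intro _; exact ⟨0, by simp⟩
      | succ n ih =>
        intro hn
        obtain ⟨s, hs⟩ := ih (by omega)
        obtain ⟨t, ht⟩ := (hq' (z, n)).1 (hz n (by omega))
        refine ⟨max s t, fun y hy => ?_⟩
        rcases Nat.lt_succ_iff_lt_or_eq.1 hy with h | rfl
        · exact qm _ _ _ (le_max_left _ _) (hs y h)
        · exact qm _ _ _ (le_max_right _ _) ht
    exact this z le_rfl
  rcases hmax _ (ce_of_re hV) with hbad | hok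
  swap
  · refine hok.subset ?_
    rintro z ⟨hz, y, hy, hyA, hyR⟩
    refine ⟨?_, hz⟩
    rintro ⟨s, hs⟩
    rcases (hq' (z, y)).2 ⟨s, hs y hy⟩ with h | h
    · exact hyR h
    · exact hyA h
  exfalso
  obtain ⟨m0, hm0⟩ := exists_bound hbad
  have hbad' : ∀ z, z ∉ A → m0 ≤ z → ∃ y, y < z ∧ y ∉ A ∧ ¬ R (z, y) := by
    intro z hz hm
    by_contra hcon
    push Not at hcon
    have : z < m0 := hm0 z ⟨hgood z fun y hy => by
      by_cases hyA : y ∈ A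
      · exact Or.inr hyA
      · exact Or.inl (hcon y hy hyA), hz⟩
    omega
  -- the construction
  let C : ℕ → ℕ → Prop := fun w s =>
    ¬ (w < s.unpair.1) ∨ (a w s ∨ ∀ u, u < w + 1 → q (s.unpair.1, u) s)
  have hC : PrimrecRel C := by
    have hz : Primrec fun b : ℕ × ℕ => b.2.unpair.1 :=
      Primrec.fst.comp (Primrec.unpair.comp Primrec.snd)
    refine PrimrecPred.or (PrimrecPred.not ?_) (PrimrecPred.or ?_ ?_)
    · exact PrimrecRel.comp Primrec.nat_lt Primrec.fst hz
    · exact ha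
    · have h1 : PrimrecRel fun (u : ℕ) (s : ℕ) => q (s.unpair.1, u) s :=
        PrimrecRel.comp hq (hz.pair Primrec.fst) Primrec.snd
      exact PrimrecRel.comp (PrimrecRel.forall_lt h1) (Primrec.succ.comp Primrec.fst) Primrec.snd
  obtain ⟨L, hLpos, hLneg, hLp⟩ : ∃ L : ℕ → List ℕ,
      (∀ s, (∀ w ∈ L s, C w s) → L (s + 1) = s.unpair.1 :: L s) ∧
      (∀ s, (¬ ∀ w ∈ L s, C w s) → L (s + 1) = L s) ∧ Primrec L := by
    refine ⟨fun n => Nat.rec [] (fun s l =>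
      @ite _ (∀ w ∈ l, C w s) (Classical.propDecidable _) (s.unpair.1 :: l) l) n, ?_, ?_, ?_⟩
    · intro s hs
      exact if_pos hs
    · intro s hs
      exact if_neg hs
    · refine Primrec.nat_rec₁ (f := fun s l =>
        @ite _ (∀ w ∈ l, C w s) (Classical.propDecidable _) (s.unpair.1 :: l) l) [] ?_
      refine @Primrec.ite _ _ _ _ _ (fun _ => Classical.propDecidable _) _ _ ?_ ?_ Primrec.snd
      · exact PrimrecRel.comp (PrimrecRel.forall_mem_list hC) Primrec.snd Primrec.fst
      · exact Primrec.list_cons.comp (Primrec.fst.comp (Primrec.unpair.comp Primrec.fst))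
          Primrec.snd
  have hmono : ∀ s t, s ≤ t → ∀ x ∈ L s, x ∈ L t := by
    intro s t hst
    induction t, hst using Nat.le_induction with
    | base => exact fun x hx => hx
    | succ t _ ih =>
      intro x hx
      by_cases hc : ∀ w ∈ L t, C w t
      · rw [hLpos t hc]
        exact List.mem_cons_of_mem _ (ih x hx)
      · rw [hLneg t hc]
        exact ih x hx
  have hW : REPred fun z : ℕ => ∃ s, ∃ x ∈ L s, x = z := by
    apply re_of_nf (q := fun z s => ∃ x ∈ L s, x = z)
    exact PrimrecRel.comp (PrimrecRel.exists_mem_list Primrec.eq)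
      (hLp.comp Primrec.snd) Primrec.fst
  rcases hmax _ (ce_of_re hW) with hf | hf
  · -- liveness
    obtain ⟨p, hp⟩ := exists_bound hf
    have hfu : (⋃ u ∈ Finset.range p, {z | z ∉ A ∧ ¬ (R (z, u) ∨ u ∈ A)}).Finite := by
      refine Set.Finite.biUnion (Finset.finite_toSet _) fun u _ => ?_
      by_cases hu : u ∈ A
      · simp [hu]
      · exact (hfin u hu).subset fun z hz => ⟨hz.1, fun h => hz.2 (Or.inl h)⟩
    obtain ⟨z, hzA, hz⟩ := (hinf.sdiff (hf.union hfu)).nonempty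
    apply hz
    by_contra hz'
    rw [Set.mem_union, not_or] at hz'
    have hzR : ∀ u, u < p → (R (z, u) ∨ u ∈ A) := by
      intro u hu
      by_contra hcon
      exact hz'.2 (Set.mem_biUnion (x := u) (by simpa using hu) ⟨hzA, hcon⟩)
    have h1 : ∀ n, ∃ s, ∀ w, w < n → w ∈ A → a w s := by
      intro n
      induction n with
      | zero => exact ⟨0, by simp⟩
      | succ n ih =>
        obtain ⟨s, hs⟩ := ih
        by_cases hn : n ∈ A
        · obtain ⟨t, ht⟩ := (ha' n).1 hn
          refine ⟨max s t, fun w hw hwA => ?_⟩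
          rcases Nat.lt_succ_iff_lt_or_eq.1 hw with h | rfl
          · exact am _ _ _ (le_max_left _ _) (hs w h hwA)
          · exact am _ _ _ (le_max_right _ _) ht
        · refine ⟨s, fun w hw hwA => ?_⟩
          rcases Nat.lt_succ_iff_lt_or_eq.1 hw with h | rfl
          · exact hs w h hwA
          · exact absurd hwA hn
    have h2 : ∀ n, n ≤ p → ∃ s, ∀ u, u < n → q (z, u) s := by
      intro n
      induction n with
      | zero => intro _; exact ⟨0, by simp⟩
      | succ n ih =>
        intro hn
        obtain ⟨s, hs⟩ := ih (by omega)
        obtain ⟨t, ht⟩ := (hq' (z, n)).1 (hzR n (by omega))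
        refine ⟨max s t, fun y hy => ?_⟩
        rcases Nat.lt_succ_iff_lt_or_eq.1 hy with h | rfl
        · exact qm _ _ _ (le_max_left _ _) (hs y h)
        · exact qm _ _ _ (le_max_right _ _) ht
    obtain ⟨s1, hs1⟩ := h1 z
    obtain ⟨s2, hs2⟩ := h2 p le_rfl
    let s := Nat.pair z (max s1 s2)
    have hs : max s1 s2 ≤ s := Nat.right_le_pair _ _
    have hsz : s.unpair.1 = z := by simp [s]
    have hcond : ∀ w ∈ L s, C w s := by
      intro w hw
      by_cases hwz : w < z
      · right
        by_cases hwA : w ∈ A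
        · left
          exact am _ _ _ (le_trans (le_max_left _ _) hs) (hs1 w hwz hwA)
        · right
          intro u hu
          have : w < p := hp w ⟨⟨s, w, hw, rfl⟩, hwA⟩
          rw [hsz]
          exact qm _ _ _ (le_trans (le_max_right _ _) hs) (hs2 u (by omega))
      · left
        rw [hsz]; exact hwz
    apply hz'.1
    refine ⟨⟨s + 1, z, ?_, rfl⟩, hzA⟩
    rw [hLpos s hcond, hsz]
    exact List.mem_cons_self
  · -- safety
    obtain ⟨m1, hm1⟩ := exists_bound hf
    have hin : ∀ z, z ∉ A → m1 ≤ z → ∃ s, z ∈ L s := by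
      intro z hz hm
      by_contra hcon
      have : z < m1 := hm1 z ⟨fun ⟨s, x, hx, hxz⟩ => hcon ⟨s, hxz ▸ hx⟩, hz⟩
      omega
    obtain ⟨w0, hw0A, hw0⟩ := hinf.exists_gt (m0 + m1)
    obtain ⟨s, hs⟩ := hin w0 hw0A (by omega)
    let S : Finset ℕ := (L s).toFinset.filter (· ∉ A)
    have hw0S : w0 ∈ S := by simp only [S, Finset.mem_filter, List.mem_toFinset]; exact ⟨hs, hw0A⟩
    obtain ⟨z1, hz1S, hz1⟩ := S.exists_max_image id ⟨w0, hw0S⟩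
    have hz1' := hz1 w0 hw0S
    simp only [id] at hz1 hz1'
    simp only [S, Finset.mem_filter, List.mem_toFinset] at hz1S
    have hex : ∃ z, z ∉ A ∧ z1 < z := by
      obtain ⟨z, h1, h2⟩ := hinf.exists_gt z1
      exact ⟨z, h1, h2⟩
    let z' := Nat.find hex
    obtain ⟨hz'A, hz'1⟩ : z' ∉ A ∧ z1 < z' := Nat.find_spec hex
    have hz'min : ∀ y, y < z' → y ∉ A → y ≤ z1 := by
      intro y hy hyA
      by_contra hcon
      exact Nat.find_min hex hy ⟨hyA, by omega⟩
    obtain ⟨y0, hy0, hy0A, hy0R⟩ := hbad' z' hz'A (by omega)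
    have hy01 := hz'min y0 hy0 hy0A
    obtain ⟨t, ht⟩ := hin z' hz'A (by omega)
    have hnot : z' ∉ L s := by
      intro h
      have := hz1 z' (by simp only [S, Finset.mem_filter, List.mem_toFinset]; exact ⟨h, hz'A⟩)
      omega
    -- no later stage can enumerate `z'`
    have : ∀ t, s ≤ t → z' ∉ L t := by
      intro t hst
      induction t, hst using Nat.le_induction with
      | base => exact hnot
      | succ t hst ih =>
        intro h
        by_cases hc : ∀ w ∈ L t, C w t
        · rw [hLpos t hc] at h
          rcases List.mem_cons.1 h with h | h
          · have h3 := hc z1 (hmono s t hst z1 hz1S.1)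
            simp only [C, ← h] at h3
            rcases h3 with h3 | h3 | h3
            · exact h3 hz'1
            · exact hz1S.2 ((ha' z1).2 ⟨t, h3⟩)
            · rcases (hq' (z', y0)).2 ⟨t, h3 y0 (by omega)⟩ with h4 | h4
              · exact hy0R h4
              · exact hy0A h4
          · exact ih h
        · rw [hLneg t hc] at h
          exact ih h
    rcases le_total s t with h | h
    · exact this t h ht
    · exact hnot (hmono t s h z' ht)

/-- Saturation of a set under `E_A`. -/
def sat (A X : Set ℕ) : Set ℕ := {z | ∃ w, w ∈ X ∧ EA A w z}

theorem EA_symm {A : Set ℕ} {m n : ℕ} (h : EA A m n) : EA A n m := by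
  rcases h with h | h
  · exact Or.inl h.symm
  · exact Or.inr ⟨h.2, h.1⟩

theorem EA_trans {A : Set ℕ} {m n k : ℕ} (h : EA A m n) (h' : EA A n k) : EA A m k := by
  rcases h with rfl | h
  · exact h'
  · rcases h' with rfl | h'
    · exact Or.inr h
    · exact Or.inr ⟨h.1, h'.2⟩

theorem subset_sat (A X : Set ℕ) : X ⊆ sat A X := fun x hx => ⟨x, hx, Or.inl rfl⟩

theorem jump_iff (A : Set ℕ) (e e' : ℕ) :
    FSJump (EA A) e e' ↔ sat A (Rng e) = sat A (Rng e') := by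
  have key : ∀ X : Set ℕ, sat A X = ⋃₀ (classOf (EA A) '' X) := by
    intro X
    ext z
    simp [sat, classOf]
  have key2 : ∀ X Y : Set ℕ, sat A X = sat A Y → classOf (EA A) '' X ⊆ classOf (EA A) '' Y := by
    rintro X Y h _ ⟨w, hw, rfl⟩
    have : w ∈ sat A Y := h ▸ subset_sat A X hw
    obtain ⟨v, hv, hvw⟩ := this
    refine ⟨v, hv, ?_⟩
    ext x
    exact ⟨fun hx => EA_trans (EA_symm hvw) hx, fun hx => EA_trans hvw hx⟩
  constructor
  · intro h
    rw [key, key]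
    exact congrArg _ h
  · intro h
    exact Set.Subset.antisymm (key2 _ _ h) (key2 _ _ h.symm)

theorem re_sat {A : Set ℕ} (hA : CeSet A) {f : ℕ → ℕ} (hf : Computable f) :
    REPred fun p : ℕ × ℕ => p.2 ∈ sat A (Rng (f p.1)) := by
  have hAre := re_of_ce hA
  have c1 : Computable fun p : (ℕ × ℕ) × ℕ => p.1.2 := Computable.snd.comp Computable.fst
  refine re_ex (p := fun p : (ℕ × ℕ) × ℕ => p.2 ∈ Rng (f p.1.1) ∧ EA A p.2 p.1.2) ?_
  refine re_and ?_ (re_or ?_ (re_and (re_comp hAre Computable.snd) (re_comp hAre c1)))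
  · exact re_comp re_Rng
      ((hf.comp (Computable.fst.comp Computable.fst)).pair Computable.snd)
  · exact re_prim (PrimrecRel.comp Primrec.eq Primrec.snd (Primrec.snd.comp Primrec.fst))

/-- The operator on sets induced by a function on indices. -/
def Fn (A : Set ℕ) (f : ℕ → ℕ) (X : Set ℕ) : Set ℕ :=
  {z | ∃ e, Rng e ⊆ X ∧ z ∈ sat A (Rng (f e))}

theorem Fn_mono (A : Set ℕ) (f : ℕ → ℕ) {X Y : Set ℕ} (h : X ⊆ Y) : Fn A f X ⊆ Fn A f Y :=
  fun _ ⟨e, he, hz⟩ => ⟨e, he.trans h, hz⟩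


theorem S_mono {A B : Set ℕ} {f : ℕ → ℕ} (hA : CeSet A) (hf : Computable f)
  (hred : ∀ e e', sat B (Rng e) = sat B (Rng e') ↔ sat A (Rng (f e)) = sat A (Rng (f e')))
    {e e' : ℕ} (h : Rng e ⊆ Rng e') : sat A (Rng (f e)) ⊆ sat A (Rng (f e')) := by
  intro z hz
  by_contra hz'
  have hR : REPred fun p : ℕ × ℕ =>
      p.2 ∈ Rng e ∨ (z ∈ sat A (Rng (f p.1)) ∧ p.2 ∈ Rng e') := by
    refine re_or ?_ (re_and ?_ ?_)
    · exact re_comp (p := fun p : ℕ × ℕ => p.2 ∈ Rng p.1) re_Rng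
        (f := fun p : ℕ × ℕ => (e, p.2)) ((Computable.const e).pair Computable.snd)
    · exact re_comp (p := fun p : ℕ × ℕ => p.2 ∈ sat A (Rng (f p.1))) (re_sat hA hf)
        (f := fun p : ℕ × ℕ => (p.1, z)) (Computable.fst.pair (Computable.const z))
    · exact re_comp (p := fun p : ℕ × ℕ => p.2 ∈ Rng p.1) re_Rng
        (f := fun p : ℕ × ℕ => (e', p.2)) ((Computable.const e').pair Computable.snd)
  obtain ⟨i, hi⟩ := re_fix hR
  by_cases hzi : z ∈ sat A (Rng (f i))
  · have : Rng i = Rng e' := by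
      rw [hi]; ext x
      constructor
      · rintro (hx | hx)
        · exact h hx
        · exact hx.2
      · intro hx; exact Or.inr ⟨hzi, hx⟩
    rw [(hred i e').1 (by rw [this])] at hzi
    exact hz' hzi
  · have : Rng i = Rng e := by
      rw [hi]; ext x
      constructor
      · rintro (hx | hx)
        · exact hx
        · exact absurd hx.1 hzi
      · intro hx; exact Or.inl hx
    rw [(hred i e).1 (by rw [this])] at hzi
    exact hzi hz

theorem Fn_eq {A B : Set ℕ} {f : ℕ → ℕ} (hA : CeSet A) (hf : Computable f)
  (hred : ∀ e e', sat B (Rng e) = sat B (Rng e') ↔ sat A (Rng (f e)) = sat A (Rng (f e')))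
    {e : ℕ} {X : Set ℕ} (h : Rng e = X) : Fn A f X = sat A (Rng (f e)) := by
  subst h
  ext z
  constructor
  · rintro ⟨i, hi, hz⟩
    exact S_mono hA hf hred hi hz
  · intro hz
    exact ⟨e, subset_rfl, hz⟩

theorem Fn_cont {A B : Set ℕ} {f : ℕ → ℕ} (hA : CeSet A) (hf : Computable f)
  (hred : ∀ e e', sat B (Rng e) = sat B (Rng e') ↔ sat A (Rng (f e)) = sat A (Rng (f e')))
    {X : Set ℕ} {z : ℕ} (hz : z ∈ Fn A f X) :
    ∃ n, z ∈ Fn A f {x | x ∈ X ∧ x < n} := by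
  obtain ⟨e, he, hz⟩ := hz
  obtain ⟨q, hq, qm, hq'⟩ := re_nf (re_sat hA hf)
  obtain ⟨r, hr, rm, hr'⟩ := re_nf re_Rng
  have hR : REPred fun p : ℕ × ℕ => ∃ s, (fun (p : ℕ × ℕ) s =>
      p.2 < s ∧ r (e, p.2) s ∧ ¬ q (p.1, z) s) p s := by
    apply re_of_nf
    have c1 : Primrec fun p : (ℕ × ℕ) × ℕ => p.1.1 := Primrec.fst.comp Primrec.fst
    have c2 : Primrec fun p : (ℕ × ℕ) × ℕ => p.1.2 := Primrec.snd.comp Primrec.fst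
    refine PrimrecPred.and ?_ (PrimrecPred.and ?_ (PrimrecPred.not ?_))
    · exact PrimrecRel.comp Primrec.nat_lt c2 Primrec.snd
    · exact PrimrecRel.comp hr ((Primrec.const e).pair c2) Primrec.snd
    · exact PrimrecRel.comp hq (c1.pair (Primrec.const z)) Primrec.snd
  obtain ⟨i, hi⟩ := re_fix hR
  have hsub : Rng i ⊆ Rng e := by
    rw [hi]
    rintro x ⟨s, -, h, -⟩
    exact (hr' (e, x)).2 ⟨s, h⟩
  by_cases hzi : z ∈ sat A (Rng (f i))
  · obtain ⟨t, ht⟩ := (hq' (i, z)).1 hzi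
    refine ⟨t, i, fun x hx => ⟨he (hsub hx), ?_⟩, hzi⟩
    rw [hi] at hx
    obtain ⟨s, h1, -, h2⟩ := hx
    by_contra hcon
    exact h2 (qm _ _ _ (by omega) ht)
  · exfalso
    apply hzi
    have : Rng i = Rng e := by
      refine hsub.antisymm ?_
      intro x hx
      obtain ⟨s, hs⟩ := (hr' (e, x)).1 hx
      rw [hi]
      refine ⟨s + x + 1, by omega, rm _ _ _ (by omega) hs, fun h => hzi ((hq' (i, z)).2 ⟨_, h⟩)⟩
    rw [(hred i e).1 (by rw [this])]
    exact hz

theorem Fn_re {A B : Set ℕ} {f : ℕ → ℕ} (hA : CeSet A) (hf : Computable f)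
  (hred : ∀ e e', sat B (Rng e) = sat B (Rng e') ↔ sat A (Rng (f e)) = sat A (Rng (f e')))
    {R : ℕ × ℕ → Prop} (hR : REPred R) :
    REPred fun p : ℕ × ℕ => p.2 ∈ Fn A f {x | R (p.1, x)} := by
  obtain ⟨g, hg, h, -⟩ := re_param hR
  refine (re_sat hA (hf.comp hg)).of_eq fun p => ?_
  rw [Fn_eq hA hf hred (h p.1)]

theorem Fn_inj {A B : Set ℕ} {f : ℕ → ℕ} (hA : CeSet A) (hf : Computable f)
  (hred : ∀ e e', sat B (Rng e) = sat B (Rng e') ↔ sat A (Rng (f e)) = sat A (Rng (f e')))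
    {X Y : Set ℕ} (hX : REPred fun x => x ∈ X) (hY : REPred fun x => x ∈ Y)
    (h : Fn A f X = Fn A f Y) : sat B X = sat B Y := by
  obtain ⟨e, he⟩ := rng_of_re hX
  obtain ⟨e', he'⟩ := rng_of_re hY
  change Rng e = X at he
  change Rng e' = Y at he'
  rw [Fn_eq hA hf hred he, Fn_eq hA hf hred he'] at h
  rw [← he, ← he']
  exact (hred e e').2 h


theorem Fn_sat {A : Set ℕ} {f : ℕ → ℕ} {X : Set ℕ} {z z' : ℕ} (hz : z ∈ Fn A f X)
    (h1 : z ∈ A) (h2 : z' ∈ A) : z' ∈ Fn A f X := by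
  obtain ⟨e, he, w, hw, hwz⟩ := hz
  exact ⟨e, he, w, hw, EA_trans hwz (Or.inr ⟨h1, h2⟩)⟩

theorem sat_mem_of_notMem {B X : Set ℕ} {x : ℕ} (hx : x ∉ B) : x ∈ sat B X ↔ x ∈ X := by
  constructor
  · rintro ⟨w, hw, rfl | h⟩
    · exact hw
    · exact absurd h.2 hx
  · exact fun h => subset_sat B X h

theorem re_finset (Y : Finset ℕ) : REPred fun x => x ∈ Y := by
  induction Y using Finset.induction_on with
  | empty =>
    refine (re_prim (p := fun x : ℕ => x < 0)
      (PrimrecRel.comp Primrec.nat_lt Primrec.id (Primrec.const 0))).of_eq fun x => ?_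
    simp
  | insert a s _ ih =>
    refine (re_or (re_prim (p := fun x : ℕ => x = a)
      (PrimrecRel.comp Primrec.eq Primrec.id (Primrec.const a))) ih).of_eq fun x => ?_
    simp

theorem re_univ : REPred fun x : ℕ => x ∈ (Set.univ : Set ℕ) := by
  refine (re_prim (p := fun x : ℕ => x = x)
    (PrimrecRel.comp Primrec.eq Primrec.id Primrec.id)).of_eq fun x => ?_
  simp

theorem re_ne : REPred fun p : ℕ × ℕ => p.2 ≠ p.1 :=
  re_prim (PrimrecPred.not (PrimrecRel.comp Primrec.eq Primrec.snd Primrec.fst))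

theorem re_ne' (x : ℕ) : REPred fun t : ℕ => t ∈ {t : ℕ | t ≠ x} :=
  re_prim (PrimrecPred.not (PrimrecRel.comp Primrec.eq Primrec.id (Primrec.const x)))

theorem re_lt_ne (n y : ℕ) : REPred fun t : ℕ => t ∈ {t : ℕ | t < n ∧ t ≠ y} :=
  re_and (re_prim (PrimrecRel.comp Primrec.nat_lt Primrec.id (Primrec.const n))) (re_ne' y)

/-- Two `A`-saturated sets that agree outside `A` and at a point of `A` are equal. -/
theorem Fn_ext {A : Set ℕ} {f : ℕ → ℕ} {X Y : Set ℕ} {p : ℕ} (hp : p ∈ A)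
    (h1 : ∀ z, z ∉ A → (z ∈ Fn A f X ↔ z ∈ Fn A f Y))
    (h2 : p ∈ Fn A f X ↔ p ∈ Fn A f Y) : Fn A f X = Fn A f Y := by
  ext z
  by_cases hz : z ∈ A
  · exact ⟨fun h => Fn_sat (h2.1 (Fn_sat h hz hp)) hp hz,
      fun h => Fn_sat (h2.2 (Fn_sat h hz hp)) hp hz⟩
  · exact h1 z hz

theorem sat_eq_iff {A B X Y : Set ℕ} (hBA : B ⊂ A) :
    sat B (sat A X) = sat B (sat A Y) ↔ sat A X = sat A Y := by
  constructor
  · intro h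
    obtain ⟨p, hpA, hpB⟩ := Set.exists_of_ssubset hBA
    have key : ∀ x, x ∉ B → (x ∈ sat A X ↔ x ∈ sat A Y) := by
      intro x hx
      rw [← sat_mem_of_notMem hx, h, sat_mem_of_notMem hx]
    have tr : ∀ (Z : Set ℕ) (x y : ℕ), x ∈ sat A Z → x ∈ A → y ∈ A → y ∈ sat A Z := by
      rintro Z x y ⟨w, hw, h⟩ hx hy
      exact ⟨w, hw, EA_trans h (Or.inr ⟨hx, hy⟩)⟩
    ext z
    by_cases hz : z ∈ A
    · exact ⟨fun h => tr _ _ _ ((key p hpB).1 (tr _ _ _ h hz hpA)) hpA hz,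
        fun h => tr _ _ _ ((key p hpB).2 (tr _ _ _ h hz hpA)) hpA hz⟩
    · exact key z fun h => hz (hBA.1 h)
  · intro h
    rw [h]

theorem reduces_part {A B : Set ℕ} (hA : CeSet A) (hBA : B ⊂ A) :
    Reduces (FSJump (EA A)) (FSJump (EA B)) := by
  obtain ⟨g, hg, h, -⟩ := re_param (re_sat hA Computable.id)
  refine ⟨g, hg, fun m n => ?_⟩
  rw [jump_iff, jump_iff, h, h]
  exact (sat_eq_iff hBA).symm


theorem co_cofinite {A B : Set ℕ} {f : ℕ → ℕ} (hA : MaximalSet A) (hBA : B ⊂ A) (hf : Computable f)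
  (hred : ∀ e e', sat B (Rng e) = sat B (Rng e') ↔ sat A (Rng (f e)) = sat A (Rng (f e')))
    (y : ℕ) : {z | z ∉ A ∧ z ∉ Fn A f {t | t ≠ y}}.Finite := by
  have hre : REPred fun z => z ∈ Fn A f {t | t ≠ y} := by
    refine re_comp (p := fun p : ℕ × ℕ => p.2 ∈ Fn A f {t | t ≠ p.1}) ?_
      (f := fun z : ℕ => (y, z)) ((Computable.const y).pair Computable.id)
    exact Fn_re hA.1 hf hred re_ne
  rcases hA.2.2 _ (ce_of_re hre) with h | h
  · exfalso
    obtain ⟨p, hpA, hpB⟩ := Set.exists_of_ssubset hBA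
    let F : Set ℕ := insert p ({z | z ∈ Fn A f {t | t ≠ y}} \ A)
    have hF : F.Finite := h.insert p
    have hI : {n | n ∉ A ∧ y < n}.Infinite := by
      have := hA.2.1.sdiff (Set.finite_Iic y)
      refine this.mono ?_
      rintro n ⟨h1, h2⟩
      exact ⟨h1, by simpa using h2⟩
    obtain ⟨n, hn, n', hn', hne, heq⟩ := hI.exists_ne_map_eq_of_mapsTo
      (f := fun n => {z | z ∈ F ∧ z ∈ Fn A f {t | t < n ∧ t ≠ y}}) (t := 𝒫 F)
      (fun n _ z hz => hz.1) hF.finite_subsets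
    have key : ∀ n n' : ℕ, n ∉ A → y < n → n < n' →
        {z | z ∈ F ∧ z ∈ Fn A f {t | t < n ∧ t ≠ y}} =
        {z | z ∈ F ∧ z ∈ Fn A f {t | t < n' ∧ t ≠ y}} → False := by
      intro n n' hn hy hlt heq
      have hFe : Fn A f {t | t < n ∧ t ≠ y} = Fn A f {t | t < n' ∧ t ≠ y} := by
        have hz : ∀ z, z ∈ F → (z ∈ Fn A f {t | t < n ∧ t ≠ y} ↔
            z ∈ Fn A f {t | t < n' ∧ t ≠ y}) := by
          intro z hz
          have := Set.ext_iff.1 heq z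
          simpa [hz] using this
        refine Fn_ext hpA (fun z hzA => ?_) (hz p (Set.mem_insert _ _))
        have hm : ∀ k, z ∈ Fn A f {t | t < k ∧ t ≠ y} → z ∈ F := fun k hk =>
          Set.mem_insert_of_mem _ ⟨Fn_mono A f (fun t ht => ht.2) hk, hzA⟩
        exact ⟨fun h => (hz z (hm _ h)).1 h, fun h => (hz z (hm _ h)).2 h⟩
      have hs := Fn_inj hA.1 hf hred (re_lt_ne n y) (re_lt_ne n' y) hFe
      have hnB : n ∉ B := fun h => hn (hBA.1 h)
      have : n ∈ sat B {t | t < n ∧ t ≠ y} := by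
        rw [hs, sat_mem_of_notMem hnB]
        exact ⟨hlt, by omega⟩
      rw [sat_mem_of_notMem hnB] at this
      exact absurd this.1 (lt_irrefl _)
    rcases lt_or_gt_of_ne hne with hlt | hlt
    · exact key n n' hn.1 hn.2 hlt heq
    · exact key n' n hn'.1 hn'.2 hlt heq.symm
  · refine h.subset ?_
    rintro z ⟨h1, h2⟩
    exact ⟨h2, h1⟩

theorem case_in {A B : Set ℕ} {f : ℕ → ℕ} (hA : MaximalSet A) (hBA : B ⊂ A) (hf : Computable f)
  (hred : ∀ e e', sat B (Rng e) = sat B (Rng e') ↔ sat A (Rng (f e)) = sat A (Rng (f e')))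
    (hin : {x | x ∉ A ∧ x ∉ Fn A f {t | t ≠ x}}.Finite) : False := by
  obtain ⟨p, hpA, hpB⟩ := Set.exists_of_ssubset hBA
  have hbig : REPred fun q : ℕ × ℕ => q.2 ∈ Fn A f {t | t ≠ q.1} := Fn_re hA.1 hf hred re_ne
  -- continuity: every element of the full image is eventually in the co-singleton images
  have hcont : ∀ z, z ∈ Fn A f Set.univ → ∃ n, ∀ x, n ≤ x → z ∈ Fn A f {t | t ≠ x} := by
    intro z hz
    obtain ⟨n, hn⟩ := Fn_cont hA.1 hf hred hz
    refine ⟨n, fun x hx => Fn_mono A f ?_ hn⟩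
    rintro t ⟨-, ht⟩
    have : t < n := ht
    show t ≠ x
    omega
  have hT : {z | z ∉ A ∧ z ∉ Fn A f Set.univ}.Finite := by
    refine (co_cofinite hA hBA hf hred 0).subset ?_
    rintro z ⟨h1, h2⟩
    exact ⟨h1, fun h => h2 (Fn_mono A f (Set.subset_univ _) h)⟩
  obtain ⟨m0, hm0⟩ := exists_bound hT
  have n1 : {z | z ∉ A ∧ ∃ y, y < z ∧ y ∉ A ∧ ¬ (z ∈ Fn A f {t | t ≠ y})}.Finite := by
    refine normality (R := fun q : ℕ × ℕ => q.1 ∈ Fn A f {t | t ≠ q.2}) hA ?_ ?_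
    · exact re_comp (p := fun q : ℕ × ℕ => q.2 ∈ Fn A f {t | t ≠ q.1}) hbig
        (f := fun q : ℕ × ℕ => (q.2, q.1)) (Computable.snd.pair Computable.fst)
    · intro y _
      exact co_cofinite hA hBA hf hred y
  have n2 : {x | x ∉ A ∧ ∃ y, y < x ∧ y ∉ A ∧ ¬ (y ∈ Fn A f {t | t ≠ x} ∨ y < m0)}.Finite := by
    refine normality (R := fun q : ℕ × ℕ => q.2 ∈ Fn A f {t | t ≠ q.1} ∨ q.2 < m0) hA ?_ ?_
    · exact re_or hbig
        (re_prim (PrimrecRel.comp Primrec.nat_lt Primrec.snd (Primrec.const m0)))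
    · intro y hy
      by_cases hyT : y ∈ Fn A f Set.univ
      · obtain ⟨n, hn⟩ := hcont y hyT
        refine (Set.finite_Iio n).subset ?_
        rintro x ⟨-, hx⟩
        by_contra hcon
        exact hx (Or.inl (hn x (by simpa using hcon)))
      · refine Set.finite_empty.subset ?_
        rintro x ⟨-, hx⟩
        exact hx (Or.inr (hm0 y ⟨hy, hyT⟩))
  obtain ⟨m1, hm1⟩ := exists_bound n1
  obtain ⟨m2, hm2⟩ := exists_bound n2
  obtain ⟨m3, hm3⟩ := exists_bound hin
  let M := m0 + m1 + m2 + m3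
  have hall : ∀ x z, x ∉ A → z ∉ A → M ≤ x → M ≤ z → z ∈ Fn A f {t | t ≠ x} := by
    intro x z hx hz hMx hMz
    have hM : M = m0 + m1 + m2 + m3 := rfl
    by_contra hcon
    rcases lt_trichotomy x z with h | h | h
    · have := hm1 z ⟨hz, x, h, hx, hcon⟩
      omega
    · subst h
      have := hm3 x ⟨hx, hcon⟩
      omega
    · have := hm2 x ⟨hx, z, h, hz, by
        rintro (h | h)
        · exact hcon h
        · omega⟩
      omega
  -- finitely many remaining elements
  have hfinb : ∀ k, ∃ n, ∀ z, z < k → z ∈ Fn A f Set.univ →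
      ∀ x, n ≤ x → z ∈ Fn A f {t | t ≠ x} := by
    intro k
    induction k with
    | zero => exact ⟨0, fun z hz => absurd hz (Nat.not_lt_zero z)⟩
    | succ k ih =>
      obtain ⟨n, hn⟩ := ih
      by_cases hk : k ∈ Fn A f Set.univ
      · obtain ⟨n', hn'⟩ := hcont k hk
        refine ⟨n + n', fun z hz hzT x hx => ?_⟩
        rcases Nat.lt_succ_iff_lt_or_eq.1 hz with h | rfl
        · exact hn z h hzT x (by omega)
        · exact hn' x (by omega)
      · refine ⟨n, fun z hz hzT x hx => ?_⟩
        rcases Nat.lt_succ_iff_lt_or_eq.1 hz with h | rfl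
        · exact hn z h hzT x hx
        · exact absurd hzT hk
  obtain ⟨n, hn⟩ := hfinb (M + p + 1)
  obtain ⟨x, hxA, hx⟩ := hA.2.1.exists_gt (M + n)
  have hxA : x ∉ A := hxA
  have hEq : Fn A f {t | t ≠ x} = Fn A f Set.univ := by
    refine Fn_ext hpA (fun z hz => ⟨fun h => Fn_mono A f (Set.subset_univ _) h, fun h => ?_⟩)
      ⟨fun h => Fn_mono A f (Set.subset_univ _) h, fun h => ?_⟩
    · by_cases hzM : z < M
      · exact hn z (by omega) h x (by omega)
      · exact hall x z hxA hz (by omega) (by omega)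
    · exact hn p (by omega) h x (by omega)
  have hs := Fn_inj hA.1 hf hred (re_ne' x) re_univ hEq
  have hxB : x ∉ B := fun h => hxA (hBA.1 h)
  have : x ∈ sat B {t | t ≠ x} := by
    rw [hs, sat_mem_of_notMem hxB]
    trivial
  rw [sat_mem_of_notMem hxB] at this
  exact this rfl

theorem case_out {A B : Set ℕ} {f : ℕ → ℕ} (hA : MaximalSet A) (hBA : B ⊂ A) (hf : Computable f)
  (hred : ∀ e e', sat B (Rng e) = sat B (Rng e') ↔ sat A (Rng (f e)) = sat A (Rng (f e')))
    (hout : {x | x ∉ A ∧ x ∈ Fn A f {t | t ≠ x}}.Finite) : False := by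
  classical
  obtain ⟨p, hpA, hpB⟩ := Set.exists_of_ssubset hBA
  obtain ⟨q, hqA, hqp⟩ : ∃ q, q ∈ A ∧ q ≠ p := by
    by_contra hcon
    push Not at hcon
    have hev : REPred fun x : ℕ => x % 2 = 0 :=
      re_prim (PrimrecRel.comp Primrec.eq
        (Primrec.nat_mod.comp Primrec.id (Primrec.const 2)) (Primrec.const 0))
    rcases hA.2.2 _ (ce_of_re hev) with h | h
    · obtain ⟨m, hm⟩ := exists_bound h
      have := hm (2 * (m + p + 1)) ⟨by simp, fun h => by
        have := hcon _ h
        omega⟩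
      omega
    · obtain ⟨m, hm⟩ := exists_bound h
      have := hm (2 * (m + p + 1) + 1) ⟨by simp, fun h => by
        have := hcon _ h
        omega⟩
      omega
  obtain ⟨m, hm⟩ := exists_bound hout
  let K : Finset ℕ := (Finset.range m).filter fun x => x ∉ A
  have hK : ∀ x, x ∈ K ↔ x < m ∧ x ∉ A := by simp [K]
  have hpK : p ∉ K := fun h => ((hK p).1 h).2 hpA
  have hqK : q ∉ insert p K := by
    rw [Finset.mem_insert]
    rintro (h | h)
    · exact hqp h
    · exact ((hK q).1 h).2 hqA
  let L : Finset ℕ := insert p K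
  let S : Finset ℕ := insert q L
  have hcard : S.card = L.card + 1 := Finset.card_insert_of_notMem hqK
  have hSA : ∀ x, x ∉ A → x ∈ S → x < m := by
    intro x hx hxS
    rcases Finset.mem_insert.1 hxS with rfl | h
    · exact absurd hqA hx
    · rcases Finset.mem_insert.1 h with rfl | h
      · exact absurd hpA hx
      · exact ((hK x).1 h).1
  have hsm : ∀ (Y : Finset ℕ) (z : ℕ), Y ⊆ S → z ∉ A → z ∈ Fn A f {t | t ∈ Y} → z ∈ L := by
    intro Y z hY hz hzY
    refine Finset.mem_insert_of_mem ((hK z).2 ⟨?_, hz⟩)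
    by_contra hcon
    refine hcon (hm z ⟨hz, Fn_mono A f ?_ hzY⟩)
    rintro t ht rfl
    exact hcon (hSA t hz (hY ht))
  have hinj : ∀ Y ∈ S.powerset, ∀ Y' ∈ S.powerset,
      L.filter (fun j => j ∈ Fn A f {t | t ∈ Y}) =
      L.filter (fun j => j ∈ Fn A f {t | t ∈ Y'}) → Y = Y' := by
    intro Y hY Y' hY' heq
    rw [Finset.mem_powerset] at hY hY'
    have hL : ∀ z, z ∈ L → (z ∈ Fn A f {t | t ∈ Y} ↔ z ∈ Fn A f {t | t ∈ Y'}) := by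
      intro z hz
      have := Finset.ext_iff.1 heq z
      simpa [hz] using this
    have hFe : Fn A f {t | t ∈ Y} = Fn A f {t | t ∈ Y'} :=
      Fn_ext hpA (fun z hz => ⟨fun h => (hL z (hsm Y z hY hz h)).1 h,
        fun h => (hL z (hsm Y' z hY' hz h)).2 h⟩) (hL p (Finset.mem_insert_self _ _))
    have hs : sat B {t | t ∈ Y} = sat B {t | t ∈ Y'} := Fn_inj hA.1 hf hred (re_finset Y) (re_finset Y') hFe
    have hLB : ∀ z, z ∈ L → z ∉ B := by
      intro z hz
      rcases Finset.mem_insert.1 hz with rfl | h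
      · exact hpB
      · exact fun hB => ((hK z).1 h).2 (hBA.1 hB)
    have hmem : ∀ (Z : Finset ℕ), Z ⊆ S → ∀ z, z ∈ S → (z ∈ sat B {t | t ∈ Z} ↔ z ∈ Z) := by
      intro Z hZ z hz
      refine ⟨?_, fun h => subset_sat B _ h⟩
      rintro ⟨w, hw, rfl | ⟨hwB, hzB⟩⟩
      · exact hw
      · have e1 : w = q := by
          rcases Finset.mem_insert.1 (hZ hw) with h | h
          · exact h
          · exact absurd hwB (hLB w h)
        have e2 : z = q := by
          rcases Finset.mem_insert.1 hz with h | h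
          · exact h
          · exact absurd hzB (hLB z h)
        rw [e2, ← e1]
        exact hw
    ext z
    constructor
    · intro h
      rw [← hmem Y' hY' z (hY h), ← hs]
      exact subset_sat B _ h
    · intro h
      rw [← hmem Y hY z (hY' h), hs]
      exact subset_sat B _ h
  have hle : S.powerset.card ≤ L.powerset.card :=
    Finset.card_le_card_of_injOn (fun Y => L.filter (fun j => j ∈ Fn A f {t | t ∈ Y}))
      (fun Y _ => Finset.mem_coe.2 (Finset.mem_powerset.2 (Finset.filter_subset _ _)))
      (fun Y hY Y' hY' h => hinj Y (Finset.mem_coe.1 hY) Y' (Finset.mem_coe.1 hY') h)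
  rw [Finset.card_powerset, Finset.card_powerset, hcard, pow_succ] at hle
  have : 0 < 2 ^ L.card := by positivity
  omega

theorem no_red_aux {A B : Set ℕ} {f : ℕ → ℕ} (hA : MaximalSet A) (hBA : B ⊂ A) (hf : Computable f)
  (hred : ∀ e e', sat B (Rng e) = sat B (Rng e') ↔ sat A (Rng (f e)) = sat A (Rng (f e')))
    : False := by
  have hre : REPred fun x => x ∈ Fn A f {t | t ≠ x} :=
    re_comp (p := fun q : ℕ × ℕ => q.2 ∈ Fn A f {t | t ≠ q.1}) (Fn_re hA.1 hf hred re_ne)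
      (f := fun x : ℕ => (x, x)) (Computable.id.pair Computable.id)
  rcases hA.2.2 _ (ce_of_re hre) with h | h
  · exact case_out hA hBA hf hred (h.subset fun x hx => ⟨hx.2, hx.1⟩)
  · exact case_in hA hBA hf hred (h.subset fun x hx => ⟨hx.2, hx.1⟩)


theorem no_red {A B : Set ℕ} (hA : MaximalSet A) (hBA : B ⊂ A) :
    ¬ Reduces (FSJump (EA B)) (FSJump (EA A)) := by
  rintro ⟨f, hf, h⟩
  refine no_red_aux hA hBA hf fun e e' => ?_
  rw [← jump_iff, ← jump_iff]
  exact h e e'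

theorem empty_red : Reduces (FSJump (EA ∅)) eqCE := by
  obtain ⟨g, hg, -, h⟩ := re_param re_Rng
  refine ⟨g, hg, fun m n => ?_⟩
  have hs : ∀ X : Set ℕ, sat ∅ X = X := fun X => by
    ext x
    exact sat_mem_of_notMem (Set.notMem_empty x)
  rw [jump_iff, hs, hs]
  unfold eqCE
  rw [h, h]
  exact Iff.rfl

/-- If `A` is maximal and `B ⊊ A` is c.e., then `(E_A)⁺ < (E_B)⁺`; in particular
`E_A` is not high for the computable FS-jump. -/
theorem jump_EA_lt_jump_EB_of_maximal (A B : Set ℕ) (hA : MaximalSet A)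
    (hB : CeSet B) (hBA : B ⊂ A) :
    (Reduces (FSJump (EA A)) (FSJump (EA B)) ∧
      ¬ Reduces (FSJump (EA B)) (FSJump (EA A))) ∧
    ¬ (Reduces (FSJump (EA A)) eqCE ∧ Reduces eqCE (FSJump (EA A))) := by
  refine ⟨⟨reduces_part hA.1 hBA, no_red hA hBA⟩, ?_⟩
  rintro ⟨-, f, hf, h⟩
  obtain ⟨g, hg, h'⟩ := empty_red
  have hne : (∅ : Set ℕ) ⊂ A := by
    obtain ⟨p, hp, -⟩ := Set.exists_of_ssubset hBA
    exact ⟨Set.empty_subset A, fun hs => hs hp⟩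
  exact no_red hA hne ⟨fun n => f (g n), hf.comp hg, fun m n => (h' m n).trans (h _ _)⟩
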